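/- Let (F,G) : J → ℝ² be a C¹ solution of G' = F − 4FG, F' = −F² − G on an interval J with G(t) < 1/4 and F(t) > 0 for all t ∈ J. Set M(t) = √(1 − 4G(t)) and let C₄ be the constant value of (1 + M² + 4F²)/(4M) on J. Then for any real constants C₂, C₃, the function P(t) := −(C₂·(2C₄ − M(t)) − C₃·√(4C₄·M(t) − 1 − M(t)²)) / √(M(t)) is C² and satisfies P'' + (1 − 3G(t))·P = 0 on J. -/

import Mathlib

/-- The derivative of `M = √(1 - 4G)` when `G' = F - 4FG`. -/
lemma hasDerivAt_sqrt_one_sub_four_mul {G : ℝ → ℝ} {f t : ℝ}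
    (hG : HasDerivAt G (f - 4 * f * G t) t) (hG4 : G t < 1 / 4) :
    HasDerivAt (fun s => √(1 - 4 * G s)) (-2 * f * √(1 - 4 * G t)) t := by
  have hpos : 0 < 1 - 4 * G t := by linarith
  refine (((hG.const_mul 4).const_sub 1).sqrt hpos.ne').congr_deriv ?_
  have hs : 0 < √(1 - 4 * G t) := Real.sqrt_pos.2 hpos
  have hsq := Real.sq_sqrt hpos.le
  field_simp
  linear_combination 4 * f * hsq

/-- If `M' = -2fM` then `(1 / √M)' = f / √M`. -/
lemma hasDerivAt_inv_sqrt {M : ℝ → ℝ} {f t : ℝ}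
    (hM : HasDerivAt M (-2 * f * M t) t) (hpos : 0 < M t) :
    HasDerivAt (fun s => (√(M s))⁻¹) (f * (√(M t))⁻¹) t := by
  have hs : 0 < √(M t) := Real.sqrt_pos.2 hpos
  refine ((hM.sqrt hpos.ne').inv hs.ne').congr_deriv ?_
  have hsq := Real.sq_sqrt hpos.le
  field_simp
  linear_combination -f * hsq

/-- Along a solution of `G' = F − 4FG`, `F' = −F² − G` with `G < 1/4` and
`F > 0`, setting `M = √(1 − 4G)` and `C₄` the constant value of `(1 + M² + 4F²)/(4M)`,
for any constants `C₂, C₃` the function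
`P = −(C₂(2C₄ − M) − C₃√(4C₄M − 1 − M²))/√M` is C² and satisfies `P'' + (1 − 3G)P = 0`. -/
theorem explicit_solutions_of_hill_equation
    (J : Set ℝ) (hJ : J.OrdConnected)
    (F G : ℝ → ℝ)
    (hG : ∀ t ∈ J, HasDerivAt G (F t - 4 * F t * G t) t)
    (hF : ∀ t ∈ J, HasDerivAt F (-(F t) ^ 2 - G t) t)
    (hG4 : ∀ t ∈ J, G t < 1 / 4)
    (hFpos : ∀ t ∈ J, 0 < F t)
    (M : ℝ → ℝ) (hM : ∀ t, M t = Real.sqrt (1 - 4 * G t))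
    (C₄ : ℝ) (hC₄ : ∀ t ∈ J, (1 + (M t) ^ 2 + 4 * (F t) ^ 2) / (4 * M t) = C₄)
    (C₂ C₃ : ℝ)
    (P : ℝ → ℝ)
    (hP : ∀ t, P t =
      -((C₂ * (2 * C₄ - M t) - C₃ * Real.sqrt (4 * C₄ * M t - 1 - (M t) ^ 2))
        / Real.sqrt (M t))) :
    ∃ P' P'' : ℝ → ℝ,
      (∀ t ∈ J, HasDerivAt P (P' t) t) ∧
      (∀ t ∈ J, HasDerivAt P' (P'' t) t) ∧
      (∀ t ∈ J, P'' t + (1 - 3 * G t) * P t = 0) := by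
  have hMpos : ∀ t ∈ J, 0 < M t := fun t ht => by
    rw [hM]
    exact Real.sqrt_pos.2 (by linarith [hG4 t ht])
  have hMsq : ∀ t ∈ J, M t ^ 2 = 1 - 4 * G t := fun t ht => by
    rw [hM]
    exact Real.sq_sqrt (by linarith [hG4 t ht])
  have hM' : ∀ t ∈ J, HasDerivAt M (-2 * F t * M t) t := fun t ht => by
    rw [funext hM]
    exact hasDerivAt_sqrt_one_sub_four_mul (hG t ht) (hG4 t ht)
  have hr' : ∀ t ∈ J, HasDerivAt (fun s => (√(M s))⁻¹) (F t * (√(M t))⁻¹) t :=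
    fun t ht => hasDerivAt_inv_sqrt (hM' t ht) (hMpos t ht)
  have hF4 : ∀ t ∈ J, 4 * C₄ * M t - 1 - M t ^ 2 = (2 * F t) ^ 2 := fun t ht => by
    have h := hC₄ t ht
    rw [div_eq_iff (by linarith [hMpos t ht])] at h
    linear_combination -h
  have hS : ∀ t ∈ J, √(4 * C₄ * M t - 1 - M t ^ 2) = 2 * F t := fun t ht => by
    rw [hF4 t ht, Real.sqrt_sq (by linarith [hFpos t ht])]
  have hS' : ∀ t ∈ J, HasDerivAt (fun s => √(4 * C₄ * M s - 1 - M s ^ 2))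
      (-(2 * C₄ - M t) * M t) t := fun t ht => by
    have hF0 := hFpos t ht
    refine (((((hM' t ht).const_mul (4 * C₄)).sub_const 1).sub ((hM' t ht).pow 2)).sqrt
      (by simpa [hF4 t ht] using hF0.ne')).congr_deriv ?_
    simp only [Pi.sub_apply, Pi.pow_apply, hS t ht]
    field_simp
    ring
  have hPmul : P = fun t =>
      -((C₂ * (2 * C₄ - M t) - C₃ * √(4 * C₄ * M t - 1 - M t ^ 2)) * (√(M t))⁻¹) :=
    funext fun t => by rw [hP, div_eq_mul_inv]
  refine ⟨fun t => -((C₂ * (F t * (2 * C₄ + M t))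
      + C₃ * ((2 * C₄ - M t) * M t - 2 * F t ^ 2)) * (√(M t))⁻¹),
    fun t => -(1 - 3 * G t) * P t, fun t ht => ?_, fun t ht => ?_, fun t _ => by ring⟩
  · rw [hPmul]
    refine (((((hM' t ht).const_sub (2 * C₄)).const_mul C₂).sub
      ((hS' t ht).const_mul C₃)).mul (hr' t ht)).neg.congr_deriv ?_
    simp only [Pi.sub_apply, hS t ht]
    ring
  · have hm := hM' t ht
    have hf := hF t ht
    refine ((((hf.mul (hm.const_add (2 * C₄))).const_mul C₂).add
      ((((hm.const_sub (2 * C₄)).mul hm).sub ((hf.pow 2).const_mul 2)).const_mul C₃)).mul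
        (hr' t ht)).neg.congr_deriv ?_
    have hGM : G t = (1 - M t ^ 2) / 4 := by linarith [hMsq t ht]
    rw [hPmul]
    simp only [Pi.add_apply, Pi.sub_apply, Pi.mul_apply, Pi.pow_apply, hS t ht, hGM]
    push_cast
    linear_combination ((√(M t))⁻¹ * (C₃ * F t - C₂ * M t) / 2) * hF4 t ht
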